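/- Let θ be a flow for (A,F). Let P̄ be a finite Borel measure on ℝ^N and let p̄ : ℝ^N → [0,∞) satisfy p̄(z) ≤ C₀ ∫ (1 + |z−w|)^{−(N+2)} P̄(dw) for all z ∈ ℝ^N and some C₀ > 0. Then for every η > 0 there exists K₀ > 0 such that for all K ≥ K₀, all 0 ≤ t < s ≤ T and all x ∈ ℝ^N: ∫_{ℝ^N} 1_{ { |𝕋_{s−t}^{-1}(θ_{t,s}(y) − x)| ≥ K } } (det 𝕋_{s−t})^{-1} p̄( 𝕋_{s−t}^{-1}(θ_{t,s}(y) − x) ) dy ≤ η, where θ_{t,s}(y) is the backward flow with terminal value y at time s. -/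

import Mathlib

/-!
The point is that the flow is Lipschitz at the intrinsic scale up to an additive constant
(`flow_compare`): for two trajectories on `[t, s]` and `h = s - t`,
`1 + |𝕋_h⁻¹ (γ₁(s) - γ₂(s))| ≤ Λ (1 + |𝕋_h⁻¹ (γ₁(t) - γ₂(t))|)`, with `Λ` independent of `t`, `s`
and of the trajectories. This is Gronwall's inequality over a time interval of length `h`, because
the drift satisfies `|𝕋_h⁻¹ (b(x) - b(x'))| ≤ (C / h) (1 + |𝕋_h⁻¹ (x - x')|)` (`drift_scaled`):
a block `j ≥ i - 1` of `A` costs at most `h⁻¹` after rescaling, the lower bounds on the Hölder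
exponents make each Hölder term cost at most `h⁻¹` too (`hexp_scale`), and `r ^ β ≤ 1 + r`
for `0 < β ≤ 1`. No regularization of `F` is needed.

For the tail estimate, write `Z(y) = 𝕋_h⁻¹ (θ_{t,s}(y) - x)` and insert the envelope of `p̄`; by
Tonelli it suffices to bound the integral over `y` for each fixed `w`. Since
`Z(y) - w = 𝕋_h⁻¹ (θ_{t,s}(y) - (x + 𝕋_h w))`, `flow_compare` bounds `(1 + |Z(y) - w|)^{-(N+1)}`
by `Λ^{N+1} (1 + |𝕋_h⁻¹ (y - θ_{s,t}(x + 𝕋_h w))|)^{-(N+1)}`, and the linear change of variables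
`lintegral_scaled` turns the integral of the latter into a finite constant. The one remaining power
of decay is at most `(1 + (K - |w|)⁺)⁻¹` on the set `|Z(y)| ≥ K`, whose `P̄`-integral tends
to `0` as `K → ∞` by dominated convergence (`tail_weight_tendsto`).
-/

open MeasureTheory Real Set

noncomputable section

/-- The product state space `ℝ^N = ℝ^{d 0} × ⋯ × ℝ^{d (n-1)}`,
the `i`-th block having dimension `d i`. -/
abbrev E (n : ℕ) (d : Fin n → ℕ) : Type := ∀ i : Fin n, Fin (d i) → ℝ

/-- The action of the inverse intrinsic scale matrix `𝕋_h⁻¹ = h^{-1/α} 𝕄_h⁻¹`: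
it rescales the `i`-th block (0-indexed) by `h^{-(1/α + i)}`. -/
def Tinv {n : ℕ} {d : Fin n → ℕ} (α h : ℝ) (x : E n d) : E n d :=
  fun i => (h ^ ((1 : ℝ) / α + ((i : ℕ) : ℝ)))⁻¹ • x i

/-- `det 𝕋_h = h^{∑ i d_i (1/α + i)}` (0-indexed blocks). -/
def detT (n : ℕ) (d : Fin n → ℕ) (α h : ℝ) : ℝ :=
  h ^ (∑ i : Fin n, (d i : ℝ) * ((1 : ℝ) / α + ((i : ℕ) : ℝ)))

/-- A measurable Cauchy–Peano flow for `ẏ_u = A_u y_u + F(u, y_u)` on `[0,T]`: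
`θ_{t,s}(z) = z - ∫_t^s (A_u θ_{u,s}(z) + F(u, θ_{u,s}(z))) du` (signed integral).
For `t ≤ s`, `θ_{t,s}(y)` is the backward flow with terminal value `y` at time `s`,
and `θ_{s,t}(x)` is the forward flow started from `x` at time `t`. -/
def IsFlow {n : ℕ} {d : Fin n → ℕ} (T : ℝ) (A : ℝ → E n d →L[ℝ] E n d)
    (F : ℝ → E n d → E n d) (θ : ℝ → ℝ → E n d → E n d) : Prop :=
  Measurable (fun p : ℝ × ℝ × E n d => θ p.1 p.2.1 p.2.2) ∧
  ∀ t s : ℝ, t ∈ Icc (0 : ℝ) T → s ∈ Icc (0 : ℝ) T → ∀ z : E n d,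
    θ t s z = z - ∫ u in t..s, (A u (θ u s z) + F u (θ u s z))

/-- The time-ordered resolvent of `A`, in applied form:
`R_{s,t} x = x + ∫_t^s A_u (R_{u,t} x) du`, i.e. `∂_s R_{s,t} = A_s R_{s,t}`, `R_{t,t} = Id`. -/
def IsResolvent {n : ℕ} {d : Fin n → ℕ} (T : ℝ) (A : ℝ → E n d →L[ℝ] E n d)
    (R : ℝ → ℝ → E n d →L[ℝ] E n d) : Prop :=
  ∀ s t : ℝ, s ∈ Icc (0 : ℝ) T → t ∈ Icc (0 : ℝ) T → ∀ x : E n d,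
    R s t x = x + ∫ u in t..s, A u (R u t x)

/-- The frozen shift `m̃^{τ,ξ}_{s,t}(x) = R_{s,t} x + ∫_t^s R_{s,u} F(u, θ_{u,τ}(ξ)) du`. -/
def shiftm {n : ℕ} {d : Fin n → ℕ} (F : ℝ → E n d → E n d)
    (θ : ℝ → ℝ → E n d → E n d) (R : ℝ → ℝ → E n d →L[ℝ] E n d)
    (τ : ℝ) (ξ : E n d) (s t : ℝ) (x : E n d) : E n d :=
  R s t x + ∫ u in t..s, R s u (F u (θ u τ ξ))

/-- Family of smooth compactly supported probability-density mollifiers. -/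
def IsMollifier {n : ℕ} {d : Fin n → ℕ} (ρ : Fin n → E n d → ℝ) : Prop :=
  ∀ i, ContDiff ℝ (⊤ : ℕ∞) (ρ i) ∧ HasCompactSupport (ρ i) ∧ (∀ ω, 0 ≤ ρ i ω) ∧
    (∫ ω : E n d, ρ i ω) = 1

/-- The multiscale mollification `F^δ` of the drift `F`:
`F_i^δ(t,z) = ∫ F(t, z - δ_{i·} ⋄ ω)_i ρ_i(ω) dω`, block `j` being mollified at scale `δ_{ij}`
(equivalently, the anisotropic convolution of `F_i(t,·)` with the rescaled mollifier). -/
def molF {n : ℕ} {d : Fin n → ℕ} (ρ : Fin n → E n d → ℝ) (δ : Fin n → Fin n → ℝ)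
    (F : ℝ → E n d → E n d) (t : ℝ) (z : E n d) : E n d :=
  fun i => ∫ ω : E n d, ρ i ω • F t (fun j => z j - δ i j • ω j) i

/-- The standing assumptions of the degenerate chain setup: dimensions, sub-criticality,
lower-triangular block structure of `A`, upper-diagonal dependence, boundedness and
anisotropic Hölder continuity of `F` (indices are 0-based: block `i` here is block `i+1`
of the paper). -/
structure ChainHyp (n : ℕ) [NeZero n] (d : Fin n → ℕ) (α T K : ℝ)
    (A : ℝ → E n d →L[ℝ] E n d) (F : ℝ → E n d → E n d) (β : Fin n → ℝ) : Prop where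
  hd : ∀ i, 1 ≤ d i
  hdmono : ∀ i j : Fin n, i ≤ j → d j ≤ d i
  hα₁ : 1 < α
  hα₂ : α < 2
  hT : 0 < T
  hK : 1 ≤ K
  hAmeas : ∀ x : E n d, Measurable fun t => A t x
  hAbdd : ∃ CA : ℝ, ∀ t : ℝ, ‖A t‖ ≤ CA
  hAblock : ∀ (t : ℝ) (i j : Fin n) (v : Fin (d j) → ℝ),
    (j : ℕ) + 1 < (i : ℕ) → A t (Pi.single j v) i = 0
  hFmeas : Measurable fun p : ℝ × E n d => F p.1 p.2
  hFdep : ∀ (i : Fin n) (t : ℝ) (x x' : E n d), (∀ j, i ≤ j → x j = x' j) → F t x i = F t x' i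
  hF0 : ∀ (t : ℝ) (i : Fin n), ‖F t 0 i‖ ≤ K
  hβ0 : 0 < β 0 ∧ β 0 ≤ 1
  hβ : ∀ j : Fin n, 1 ≤ (j : ℕ) →
    (1 + α * (((j : ℕ) : ℝ) - 1)) / (1 + α * ((j : ℕ) : ℝ)) < β j ∧ β j ≤ 1
  hHolder : ∃ CH : ℝ, 0 < CH ∧
    (∀ (j : Fin n) (t : ℝ) (x x' : E n d), (∀ k, k ≠ j → x k = x' k) →
      ‖F t x 0 - F t x' 0‖ ≤ CH * ‖x j - x' j‖ ^ (β 0)) ∧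
    ∀ (i j : Fin n), 1 ≤ (i : ℕ) → i ≤ j → ∀ (t : ℝ) (x x' : E n d),
      (∀ k, k ≠ j → x k = x' k) →
      ‖F t x i - F t x' i‖ ≤ CH * ‖x j - x' j‖ ^ (β j)

/-! ### Integral Gronwall inequalities -/

lemma gronwall_fwd {f : ℝ → ℝ} {a b c f0 : ℝ} (hf : ContinuousOn f (Icc a b))
    (hf0 : ∀ r ∈ Icc a b, 0 ≤ f r) (h0 : 0 ≤ f0) (hc : 0 ≤ c)
    (h : ∀ r ∈ Icc a b, f r ≤ f0 + ∫ v in a..r, c * (1 + f v)) :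
    ∀ r ∈ Icc a b, 1 + f r ≤ (1 + f0) * exp (c * (r - a)) := by
  intro r hr
  have hab : a ≤ b := hr.1.trans hr.2
  -- a globally continuous extension, so that its primitive is differentiable at the endpoints too
  set g : ℝ → ℝ := IccExtend hab ((Icc a b).domRestrict f) with hg
  have hgc : Continuous g := hf.domRestrict.Icc_extend'
  have hgf : ∀ v ∈ Icc a b, g v = f v := fun v hv => by
    rw [hg, IccExtend_of_mem _ _ hv]; rfl
  have hint : ∀ r ∈ Icc a b, ∫ v in a..r, c * (1 + f v) = ∫ v in a..r, c * (1 + g v) := by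
    intro r hr
    refine intervalIntegral.integral_congr fun v hv => ?_
    rw [uIcc_of_le hr.1] at hv
    simp only [hgf v ⟨hv.1, hv.2.trans hr.2⟩]
  -- the right-hand side is `C¹`, unlike `f`, so the differential Gronwall lemma applies to it
  have hd : ∀ u, HasDerivAt (fun u => 1 + f0 + ∫ v in a..u, c * (1 + g v)) (c * (1 + g u)) u := by
    intro u
    have hcont : Continuous fun v => c * (1 + g v) := by fun_prop
    exact (intervalIntegral.integral_hasDerivAt_right (hcont.intervalIntegrable _ _)
      (hcont.stronglyMeasurableAtFilter _ _) hcont.continuousAt).const_add _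
  have key := norm_le_gronwallBound_of_norm_deriv_right_le (δ := 1 + f0) (K := c) (ε := 0)
    (a := a) (b := b)
    (f := fun u => 1 + f0 + ∫ v in a..u, c * (1 + g v)) (f' := fun u => c * (1 + g u))
    (fun u _ => (hd u).continuousAt.continuousWithinAt)
    (fun u _ => (hd u).hasDerivWithinAt) (by simp [abs_of_nonneg (show 0 ≤ 1 + f0 by linarith)])
    (fun u hu => by
      have hu' : u ∈ Icc a b := ⟨hu.1, hu.2.le⟩
      have h1 := h u hu'
      have h2 := hf0 u hu'
      rw [hint u hu', ← hgf u hu'] at h1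
      rw [← hgf u hu'] at h2
      rw [norm_mul, norm_of_nonneg hc, norm_of_nonneg (by linarith), norm_of_nonneg (by linarith),
        add_zero]
      exact mul_le_mul_of_nonneg_left (by linarith) hc) r hr
  rw [gronwallBound_ε0] at key
  refine le_trans ?_ key
  refine le_trans ?_ (le_abs_self _)
  have h1 := h r hr
  rw [hint r hr] at h1
  linarith

lemma gronwall_bwd {f : ℝ → ℝ} {a b c f0 : ℝ} (hf : ContinuousOn f (Icc a b))
    (hf0 : ∀ r ∈ Icc a b, 0 ≤ f r) (h0 : 0 ≤ f0) (hc : 0 ≤ c)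
    (h : ∀ r ∈ Icc a b, f r ≤ f0 + ∫ v in r..b, c * (1 + f v)) :
    ∀ r ∈ Icc a b, 1 + f r ≤ (1 + f0) * exp (c * (b - r)) := by
  intro r hr
  have hm : ∀ v ∈ Icc a b, a + b - v ∈ Icc a b := fun v hv =>
    ⟨by linarith [hv.2], by linarith [hv.1]⟩
  have key := gronwall_fwd (f := fun v => f (a + b - v)) (a := a) (b := b) (c := c) (f0 := f0)
    (hf.comp (by fun_prop) hm) (fun v hv => hf0 _ (hm v hv)) h0 hc (fun v hv => by
      have h1 := h _ (hm v hv)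
      rw [intervalIntegral.integral_comp_sub_left (fun v => c * (1 + f v)) (a + b)]
      convert h1 using 4
      ring) _ (hm r hr)
  simp only [sub_sub_cancel] at key
  convert key using 3
  ring

/-! ### The drift at the intrinsic scale -/

lemma scale_const {T0 : ℝ} (hT0 : 0 < T0) {q e : ℝ} (hq : e - 1 ≤ q) :
    ∃ M : ℝ, 0 ≤ M ∧ ∀ h : ℝ, 0 < h → h ≤ T0 → (h ^ e)⁻¹ * h ^ q ≤ M / h := by
  refine ⟨T0 ^ (q - e + 1), by positivity, fun h h0 hT => ?_⟩
  rw [le_div_iff₀ h0, ← rpow_neg h0.le, ← rpow_add h0]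
  nth_rewrite 2 [← rpow_one h]
  rw [← rpow_add h0]
  have : -e + q + 1 = q - e + 1 := by ring
  rw [this]
  exact rpow_le_rpow h0.le hT (by linarith)

section chain
variable {n : ℕ} [NeZero n] {d : Fin n → ℕ} {α T K' : ℝ}
    {A : ℝ → E n d →L[ℝ] E n d} {F : ℝ → E n d → E n d} {β : Fin n → ℝ}

/-- The Hölder exponent of `F_i` in its `j`-th variable. -/
def hexp (β : Fin n → ℝ) (i j : Fin n) : ℝ := if i = 0 then β 0 else β j

lemma hexp_pos (hc : ChainHyp n d α T K' A F β) {i j : Fin n} (hij : i ≤ j) :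
    0 < hexp β i j ∧ hexp β i j ≤ 1 := by
  unfold hexp
  split_ifs with h
  · exact hc.hβ0
  · have hj : 1 ≤ (j : ℕ) := by
      have : (i : ℕ) ≠ 0 := fun h' => h (Fin.ext (by simpa using h'))
      have := Fin.le_def.mp hij
      omega
    refine ⟨lt_of_le_of_lt ?_ (hc.hβ j hj).1, (hc.hβ j hj).2⟩
    have hj' : (1 : ℝ) ≤ (j : ℕ) := by exact_mod_cast hj
    have := hc.hα₁
    have h1 : 0 ≤ α * (((j : ℕ) : ℝ) - 1) := mul_nonneg (by linarith) (by linarith)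
    positivity

/-- Multiplying the Hölder thresholds by the intrinsic scale exponents loses at most one power
of time. -/
lemma hexp_scale (hc : ChainHyp n d α T K' A F β) {i j : Fin n} (hij : i ≤ j) :
    (1 / α + ((i : ℕ) : ℝ)) - 1 ≤ (1 / α + ((j : ℕ) : ℝ)) * hexp β i j := by
  have hα := hc.hα₁
  have hα0 : 0 < α := by linarith
  have hinv : 1 / α ≤ 1 := by rw [div_le_one hα0]; exact hα.le
  have hinv0 : 0 < 1 / α := by positivity
  by_cases h : i = 0
  · have := (hexp_pos hc hij).1
    subst h
    have : (0 : ℝ) ≤ (1 / α + ((j : ℕ) : ℝ)) * hexp β 0 j := by positivity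
    simp only [Fin.val_zero, Nat.cast_zero, add_zero]
    linarith
  · have hi : (i : ℕ) ≠ 0 := fun h' => h (Fin.ext (by simpa using h'))
    have hij' := Fin.le_def.mp hij
    have hj : 1 ≤ (j : ℕ) := by omega
    have h1 := (hc.hβ j hj).1
    simp only [hexp, if_neg h]
    have h2 : (1 / α + ((j : ℕ) : ℝ)) *
        ((1 + α * (((j : ℕ) : ℝ) - 1)) / (1 + α * ((j : ℕ) : ℝ))) = 1 / α + (j : ℕ) - 1 := by
      have : 1 + α * ((j : ℕ) : ℝ) ≠ 0 := by positivity
      field_simp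
      ring
    have h3 : (1 / α + ((j : ℕ) : ℝ)) *
        ((1 + α * (((j : ℕ) : ℝ) - 1)) / (1 + α * ((j : ℕ) : ℝ))) ≤
        (1 / α + ((j : ℕ) : ℝ)) * β j := mul_le_mul_of_nonneg_left h1.le (by positivity)
    have h4 : ((i : ℕ) : ℝ) ≤ (j : ℕ) := by exact_mod_cast hij'
    linarith

/-- Telescoping the one-variable Hölder bounds; variables `j < i` do not contribute to `F_i`. -/
lemma F_diff (hc : ChainHyp n d α T K' A F β) :
    ∃ CH : ℝ, 0 < CH ∧ ∀ (i : Fin n) (t : ℝ) (x x' : E n d),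
      ‖F t x i - F t x' i‖ ≤
        ∑ j, if i ≤ j then CH * ‖x j - x' j‖ ^ hexp β i j else 0 := by
  obtain ⟨CH, hCH, h0, h1⟩ := hc.hHolder
  refine ⟨CH, hCH, fun i t x x' => ?_⟩
  have one : ∀ (j : Fin n) (x x' : E n d), (∀ k, k ≠ j → x k = x' k) →
      ‖F t x i - F t x' i‖ ≤ if i ≤ j then CH * ‖x j - x' j‖ ^ hexp β i j else 0 := by
    intro j x x' hx
    split_ifs with hij
    · by_cases h : i = 0
      · subst h
        simpa [hexp] using h0 j t x x' hx
      · have hi : 1 ≤ (i : ℕ) :=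
          Nat.one_le_iff_ne_zero.mpr fun h' => h (Fin.ext (by simpa using h'))
        simpa [hexp, h] using h1 i j hi hij t x x' hx
    · rw [hc.hFdep i t x x' fun k hk => hx k (by rintro rfl; exact hij hk)]
      simp
  -- change the coordinates in `S` one at a time
  have tel : ∀ (S : Finset (Fin n)) (x : E n d), (∀ k, k ∉ S → x k = x' k) →
      ‖F t x i - F t x' i‖ ≤
        ∑ j ∈ S, if i ≤ j then CH * ‖x j - x' j‖ ^ hexp β i j else 0 := by
    intro S
    induction S using Finset.induction_on with
    | empty =>
      intro x hx
      have : x = x' := funext fun k => hx k (by simp)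
      simp [this]
    | insert a S ha ih =>
      intro x hx
      have e1 := one a x (Function.update x a (x' a)) fun k hk => by
        rw [Function.update_of_ne hk]
      have e2 := ih (Function.update x a (x' a)) fun k hk => by
        by_cases hka : k = a
        · subst hka; simp
        · rw [Function.update_of_ne hka]; exact hx k (by simp [hka, hk])
      rw [Function.update_self] at e1
      rw [Finset.sum_insert ha]
      have e3 : ∑ j ∈ S, (if i ≤ j then
            CH * ‖Function.update x a (x' a) j - x' j‖ ^ hexp β i j else 0) =
          ∑ j ∈ S, if i ≤ j then CH * ‖x j - x' j‖ ^ hexp β i j else 0 := by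
        refine Finset.sum_congr rfl fun j hj => ?_
        rw [Function.update_of_ne (by rintro rfl; exact ha hj)]
      rw [e3] at e2
      exact (norm_sub_le_norm_sub_add_norm_sub _ _ _).trans (add_le_add e1 e2)
  exact tel Finset.univ x (by simp)

/-- Row `i` of `A` only sees the blocks `j ≥ i - 1`. -/
lemma A_diff (hc : ChainHyp n d α T K' A F β) :
    ∃ CA : ℝ, 0 ≤ CA ∧ ∀ (i : Fin n) (t : ℝ) (v : E n d),
      ‖A t v i‖ ≤ ∑ j : Fin n, if (i : ℕ) ≤ j + 1 then CA * ‖v j‖ else 0 := by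
  obtain ⟨CA, hCA⟩ := hc.hAbdd
  refine ⟨CA, (norm_nonneg _).trans (hCA 0), fun i t v => ?_⟩
  have hv : A t v i = ∑ j, A t (Pi.single j (v j)) i := by
    conv_lhs => rw [← Finset.univ_sum_single v]
    rw [map_sum, Finset.sum_apply]
  rw [hv]
  refine (norm_sum_le _ _).trans (Finset.sum_le_sum fun j _ => ?_)
  split_ifs with h
  · calc ‖A t (Pi.single j (v j)) i‖ ≤ ‖A t (Pi.single j (v j))‖ := norm_le_pi_norm _ i
      _ ≤ CA * ‖(Pi.single j (v j) : E n d)‖ := (A t).le_of_opNorm_le (hCA t) _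
      _ = CA * ‖v j‖ := by rw [Pi.norm_single]
  · rw [hc.hAblock t i j (v j) (by omega)]; simp

/-- The drift is Lipschitz at the intrinsic scale `h`, up to an additive constant, with Lipschitz
constant of order `1 / h`. -/
lemma drift_scaled (hc : ChainHyp n d α T K' A F β) {T0 : ℝ} (hT0 : 0 < T0) :
    ∃ C : ℝ, 0 ≤ C ∧ ∀ h : ℝ, 0 < h → h ≤ T0 → ∀ (u : ℝ) (x x' : E n d),
      ‖Tinv α h ((A u x + F u x) - (A u x' + F u x'))‖ ≤
        C / h * (1 + ‖Tinv α h (x - x')‖) := by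
  obtain ⟨CH, hCH, hF⟩ := F_diff hc
  obtain ⟨CA, hCA, hA⟩ := A_diff hc
  have hα0 : 0 < α := by linarith [hc.hα₁]
  set e : Fin n → ℝ := fun i => 1 / α + ((i : ℕ) : ℝ) with he
  have h1 : ∀ i j : Fin n, ∃ M : ℝ, 0 ≤ M ∧ ((i : ℕ) ≤ j + 1 →
      ∀ h : ℝ, 0 < h → h ≤ T0 → (h ^ e i)⁻¹ * h ^ e j ≤ M / h) := by
    intro i j
    by_cases hij : (i : ℕ) ≤ j + 1
    · have : e i - 1 ≤ e j := by
        have : ((i : ℕ) : ℝ) ≤ (j : ℕ) + 1 := by exact_mod_cast hij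
        simp only [he]; linarith
      obtain ⟨M, hM, hM'⟩ := scale_const hT0 this
      exact ⟨M, hM, fun _ => hM'⟩
    · exact ⟨0, le_rfl, fun h => absurd h hij⟩
  have h2 : ∀ i j : Fin n, ∃ M : ℝ, 0 ≤ M ∧ (i ≤ j →
      ∀ h : ℝ, 0 < h → h ≤ T0 → (h ^ e i)⁻¹ * h ^ (e j * hexp β i j) ≤ M / h) := by
    intro i j
    by_cases hij : i ≤ j
    · obtain ⟨M, hM, hM'⟩ := scale_const hT0 (hexp_scale hc hij)
      exact ⟨M, hM, fun _ => hM'⟩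
    · exact ⟨0, le_rfl, fun h => absurd h hij⟩
  choose M1 hM1 hM1' using h1
  choose M2 hM2 hM2' using h2
  have hnn : ∀ i j, 0 ≤ CA * M1 i j + CH * M2 i j := fun i j =>
    add_nonneg (mul_nonneg hCA (hM1 i j)) (mul_nonneg hCH.le (hM2 i j))
  refine ⟨∑ i, ∑ j, (CA * M1 i j + CH * M2 i j),
    Finset.sum_nonneg fun i _ => Finset.sum_nonneg fun j _ => hnn i j, ?_⟩
  intro h h0 hT u x x'
  set D := ‖Tinv α h (x - x')‖ with hD
  have hD0 : 0 ≤ D := norm_nonneg _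
  have hδ : ∀ j, ‖x j - x' j‖ ≤ h ^ e j * D := by
    intro j
    have hp : 0 < h ^ e j := rpow_pos_of_pos h0 _
    have := norm_le_pi_norm (Tinv α h (x - x')) j
    rw [← hD] at this
    simp only [Tinv, norm_smul, Pi.sub_apply, norm_inv] at this
    rw [norm_of_nonneg hp.le, inv_mul_le_iff₀ hp] at this
    exact this
  refine (pi_norm_le_iff_of_nonneg (by
    have := Finset.sum_nonneg fun i (_ : i ∈ Finset.univ) =>
      Finset.sum_nonneg fun j (_ : j ∈ Finset.univ) => hnn i j
    positivity)).2 fun i => ?_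
  have hp : 0 < h ^ e i := rpow_pos_of_pos h0 _
  have step : ‖((A u x + F u x) - (A u x' + F u x')) i‖ ≤
      ∑ j : Fin n, ((if (i : ℕ) ≤ j + 1 then CA * ‖x j - x' j‖ else 0) +
        if i ≤ j then CH * ‖x j - x' j‖ ^ hexp β i j else 0) := by
    have : ((A u x + F u x) - (A u x' + F u x')) i =
        A u (x - x') i + (F u x i - F u x' i) := by
      simp only [map_sub, Pi.sub_apply, Pi.add_apply]; abel
    rw [this, Finset.sum_add_distrib]
    exact (norm_add_le _ _).trans (add_le_add (hA i u (x - x')) (hF i u x x'))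
  have hle : ‖Tinv α h ((A u x + F u x) - (A u x' + F u x')) i‖ ≤
      ∑ j, (CA * M1 i j + CH * M2 i j) / h * (1 + D) := by
    simp only [Tinv, norm_smul, norm_inv]
    rw [norm_of_nonneg hp.le]
    refine (mul_le_mul_of_nonneg_left step (by positivity)).trans ?_
    rw [Finset.mul_sum]
    refine Finset.sum_le_sum fun j _ => ?_
    rw [mul_add, add_div, add_mul]
    refine add_le_add ?_ ?_
    · split_ifs with hij
      · calc (h ^ e i)⁻¹ * (CA * ‖x j - x' j‖) ≤ (h ^ e i)⁻¹ * (CA * (h ^ e j * D)) := by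
              gcongr; exact hδ j
          _ = CA * ((h ^ e i)⁻¹ * h ^ e j) * D := by ring
          _ ≤ CA * (M1 i j / h) * (1 + D) := by
              have := hM1' i j hij h h0 hT
              have := hM1 i j
              gcongr
              linarith
          _ = CA * M1 i j / h * (1 + D) := by ring
      · have := hM1 i j
        rw [mul_zero]; positivity
    · split_ifs with hij
      · obtain ⟨hb0, hb1⟩ := hexp_pos hc hij
        have hDb : D ^ hexp β i j ≤ 1 + D := by
          calc D ^ hexp β i j ≤ (1 + D) ^ hexp β i j :=
                rpow_le_rpow hD0 (by linarith) hb0.le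
            _ ≤ (1 + D) ^ (1 : ℝ) := rpow_le_rpow_of_exponent_le (by linarith) hb1
            _ = 1 + D := rpow_one _
        have hpow : ‖x j - x' j‖ ^ hexp β i j ≤ h ^ (e j * hexp β i j) * (1 + D) := by
          calc ‖x j - x' j‖ ^ hexp β i j ≤ (h ^ e j * D) ^ hexp β i j :=
                rpow_le_rpow (norm_nonneg _) (hδ j) hb0.le
            _ = h ^ (e j * hexp β i j) * D ^ hexp β i j := by
                rw [mul_rpow (by positivity) hD0, rpow_mul h0.le]
            _ ≤ _ := by gcongr
        calc (h ^ e i)⁻¹ * (CH * ‖x j - x' j‖ ^ hexp β i j)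
            ≤ (h ^ e i)⁻¹ * (CH * (h ^ (e j * hexp β i j) * (1 + D))) := by gcongr
          _ = CH * ((h ^ e i)⁻¹ * h ^ (e j * hexp β i j)) * (1 + D) := by ring
          _ ≤ CH * (M2 i j / h) * (1 + D) := by
              have := hM2' i j hij h h0 hT
              gcongr
          _ = CH * M2 i j / h * (1 + D) := by ring
      · have := hM2 i j
        rw [mul_zero]; positivity
  refine hle.trans ?_
  rw [← Finset.sum_mul, ← Finset.sum_div]
  have : ∑ j, (CA * M1 i j + CH * M2 i j) ≤ ∑ i, ∑ j, (CA * M1 i j + CH * M2 i j) :=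
    Finset.single_le_sum (f := fun i => ∑ j, (CA * M1 i j + CH * M2 i j))
      (fun i _ => Finset.sum_nonneg fun j _ => hnn i j) (Finset.mem_univ i)
  gcongr

/-- Linear growth, obtained from `drift_scaled` at scale `h = 1`, where `𝕋_h` is the identity. -/
lemma drift_growth (hc : ChainHyp n d α T K' A F β) :
    ∃ C : ℝ, 0 ≤ C ∧ ∀ (u : ℝ) (x : E n d), ‖A u x + F u x‖ ≤ C * (1 + ‖x‖) := by
  obtain ⟨C, hC, h⟩ := drift_scaled hc one_pos
  have hK : 0 ≤ K' := by linarith [hc.hK]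
  have hid : ∀ x : E n d, Tinv α 1 x = x := fun x => by funext i; simp [Tinv]
  refine ⟨K' + C, by linarith, fun u x => ?_⟩
  have h1 := h 1 one_pos le_rfl u x 0
  rw [hid, hid, map_zero, zero_add, sub_zero, div_one] at h1
  have h2 : ‖F u 0‖ ≤ K' := (pi_norm_le_iff_of_nonneg hK).2 (hc.hF0 u)
  have h3 := norm_sub_norm_le (A u x + F u x) (F u 0)
  nlinarith [norm_nonneg x]

end chain
/-! ### Integrability along the flow and comparison of trajectories -/

section flow
variable {n : ℕ} [NeZero n] {d : Fin n → ℕ} {α T K' : ℝ}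
    {A : ℝ → E n d →L[ℝ] E n d} {F : ℝ → E n d → E n d} {β : Fin n → ℝ}
    {θ : ℝ → ℝ → E n d → E n d}

lemma drift_measurable (hc : ChainHyp n d α T K' A F β) (hθ : IsFlow T A F θ)
    (s : ℝ) (z : E n d) :
    Measurable fun u => A u (θ u s z) + F u (θ u s z) := by
  have hg : Measurable fun u => θ u s z :=
    hθ.1.comp (by fun_prop : Measurable fun u : ℝ => (u, s, z))
  have hA : Measurable (Function.uncurry fun (v : E n d) (u : ℝ) => A u v) :=
    measurable_uncurry_of_continuous_of_measurable (fun u => (A u).continuous) hc.hAmeas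
  exact (hA.comp (hg.prodMk measurable_id)).add (hc.hFmeas.comp (measurable_id.prodMk hg))

/-- The drift is integrable along every trajectory, so the integral in the flow equation is never
a junk value: on the set of times where the primitive exists, Gronwall bounds the trajectory, and
elsewhere the trajectory equals its datum `z` by the convention on non-integrable functions. -/
lemma flow_integrable (hc : ChainHyp n d α T K' A F β) (hθ : IsFlow T A F θ)
    {s : ℝ} (hs : s ∈ Icc 0 T) (z : E n d) {a b : ℝ} (ha : a ∈ Icc 0 T) (hb : b ∈ Icc 0 T) :
    IntervalIntegrable (fun u => A u (θ u s z) + F u (θ u s z)) volume a b := by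
  obtain ⟨C, hC, hgr⟩ := drift_growth hc
  set B : ℝ → E n d := fun u => A u (θ u s z) + F u (θ u s z) with hB
  have hBm : Measurable B := drift_measurable hc hθ s z
  have hT := hc.hT
  have claim : ∀ u ∈ Icc 0 T, 1 + ‖θ u s z‖ ≤ (1 + ‖z‖) * exp (C * T) := by
    intro u hu
    have hexp_le : ∀ v, v ≤ T → (1 + ‖z‖) * exp (C * v) ≤ (1 + ‖z‖) * exp (C * T) := by
      intro v hv
      gcongr
    by_cases hint : IntervalIntegrable B volume u s
    · have hcont : ContinuousOn (fun r => θ r s z) (uIcc u s) := by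
        have h1 := intervalIntegral.continuousOn_primitive_interval' hint right_mem_uIcc
        refine ((continuousOn_const (c := z)).add h1).congr fun r hr => ?_
        have hr' : r ∈ Icc 0 T := uIcc_subset_Icc hu hs hr
        rw [hθ.2 r s hr' hs z, intervalIntegral.integral_symm s r]
        simp [hB]
      have hci : ∀ p q, p ∈ uIcc u s → q ∈ uIcc u s →
          IntervalIntegrable (fun v => C * (1 + ‖θ v s z‖)) volume p q := by
        intro p q hp hq
        refine ContinuousOn.intervalIntegrable ?_
        have := hcont.mono (uIcc_subset_uIcc hp hq)
        fun_prop
      rcases le_total u s with hus | hsu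
      · have hI : uIcc u s = Icc u s := uIcc_of_le hus
        rw [hI] at hcont hci
        have := gronwall_bwd (f := fun r => ‖θ r s z‖) (a := u) (b := s) (c := C) (f0 := ‖z‖)
          hcont.norm (fun _ _ => norm_nonneg _) (norm_nonneg _) hC (fun r hr => by
            have hr' : r ∈ Icc 0 T := ⟨hu.1.trans hr.1, hr.2.trans hs.2⟩
            have h2 := intervalIntegral.norm_integral_le_of_norm_le (f := B) hr.2
              (Filter.Eventually.of_forall fun v _ => hgr v (θ v s z))
              (hci r s hr ⟨hus, le_rfl⟩)
            nth_rewrite 1 [hθ.2 r s hr' hs z]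
            exact (norm_sub_le _ _).trans (by gcongr)) u ⟨le_rfl, hus⟩
        exact this.trans (hexp_le _ (by linarith [hu.1, hs.2]))
      · have hI : uIcc u s = Icc s u := uIcc_of_ge hsu
        rw [hI] at hcont hci
        have := gronwall_fwd (f := fun r => ‖θ r s z‖) (a := s) (b := u) (c := C) (f0 := ‖z‖)
          hcont.norm (fun _ _ => norm_nonneg _) (norm_nonneg _) hC (fun r hr => by
            have hr' : r ∈ Icc 0 T := ⟨hs.1.trans hr.1, hr.2.trans hu.2⟩
            have h2 := intervalIntegral.norm_integral_le_of_norm_le (f := B) hr.1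
              (Filter.Eventually.of_forall fun v _ => hgr v (θ v s z))
              (hci s r ⟨le_rfl, hsu⟩ hr)
            nth_rewrite 1 [hθ.2 r s hr' hs z]
            rw [intervalIntegral.integral_symm s r, sub_neg_eq_add]
            exact (norm_add_le _ _).trans (by gcongr)) u ⟨hsu, le_rfl⟩
        exact this.trans (hexp_le _ (by linarith [hu.2, hs.1]))
    · rw [hθ.2 u s hu hs z, intervalIntegral.integral_undef hint, sub_zero]
      have := hexp_le 0 hT.le
      simpa using this
  refine (intervalIntegrable_const (c := C * ((1 + ‖z‖) * exp (C * T)))).mono_fun'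
    hBm.aestronglyMeasurable ?_
  filter_upwards [ae_restrict_mem measurableSet_uIoc] with u hu
  have hu' : u ∈ Icc 0 T := uIcc_subset_Icc ha hb (uIoc_subset_uIcc hu)
  exact (hgr u _).trans (mul_le_mul_of_nonneg_left (claim u hu') hC)

/-- `𝕋_h⁻¹` as a continuous linear map. -/
def TinvL {n : ℕ} {d : Fin n → ℕ} (α h : ℝ) : E n d →L[ℝ] E n d :=
  ContinuousLinearMap.pi fun i =>
    (h ^ ((1 : ℝ) / α + ((i : ℕ) : ℝ)))⁻¹ • ContinuousLinearMap.proj i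

lemma TinvL_apply {n : ℕ} {d : Fin n → ℕ} (α h : ℝ) (x : E n d) :
    TinvL α h x = Tinv α h x := rfl

/-- Approximate Lipschitz property of the flow at the intrinsic scale: running two trajectories
forward over `[t, s]` enlarges their rescaled distance by at most a constant factor, up to an
additive constant. -/
lemma flow_compare (hc : ChainHyp n d α T K' A F β) (hθ : IsFlow T A F θ) :
    ∃ Λ : ℝ, 0 < Λ ∧ ∀ t s : ℝ, 0 ≤ t → t < s → s ≤ T → ∀ x y : E n d,
      1 + ‖Tinv α (s - t) (y - θ s t x)‖ ≤ Λ * (1 + ‖Tinv α (s - t) (θ t s y - x)‖) := by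
  obtain ⟨C, hC, hdr⟩ := drift_scaled hc hc.hT
  refine ⟨exp C, exp_pos C, fun t s ht0 hts hsT x y => ?_⟩
  have hs : s ∈ Icc 0 T := ⟨by linarith, hsT⟩
  have ht : t ∈ Icc 0 T := ⟨ht0, by linarith⟩
  have hh : 0 < s - t := by linarith
  have hhT : s - t ≤ T := by linarith
  have hsub : ∀ u ∈ Icc t s, u ∈ Icc 0 T := fun u hu => ⟨ht0.trans hu.1, hu.2.trans hsT⟩
  set b₁ : ℝ → E n d := fun u => A u (θ u s y) + F u (θ u s y) with hb₁
  set b₂ : ℝ → E n d := fun u => A u (θ u t x) + F u (θ u t x) with hb₂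
  have i₁ : ∀ p q, p ∈ Icc 0 T → q ∈ Icc 0 T → IntervalIntegrable b₁ volume p q :=
    fun p q hp hq => flow_integrable hc hθ hs y hp hq
  have i₂ : ∀ p q, p ∈ Icc 0 T → q ∈ Icc 0 T → IntervalIntegrable b₂ volume p q :=
    fun p q hp hq => flow_integrable hc hθ ht x hp hq
  have i₃ : ∀ p q, p ∈ Icc 0 T → q ∈ Icc 0 T →
      IntervalIntegrable (fun v => TinvL α (s - t) (b₁ v - b₂ v)) volume p q := fun p q hp hq =>
    ⟨(TinvL α (s - t)).integrable_comp ((i₁ p q hp hq).sub (i₂ p q hp hq)).1,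
      (TinvL α (s - t)).integrable_comp ((i₁ p q hp hq).sub (i₂ p q hp hq)).2⟩
  set Y : ℝ → E n d := fun u => Tinv α (s - t) (θ u s y - θ u t x) with hY
  have hYeq : ∀ u ∈ Icc t s, Y u = Tinv α (s - t) (θ t s y - x) +
      ∫ v in t..u, TinvL α (s - t) (b₁ v - b₂ v) := by
    intro u hu
    have hu' := hsub u hu
    rw [(TinvL α (s - t)).intervalIntegral_comp_comm ((i₁ t u ht hu').sub (i₂ t u ht hu'))]
    simp only [hY, ← TinvL_apply]
    rw [← map_add]
    congr 1
    rw [intervalIntegral.integral_sub (i₁ t u ht hu') (i₂ t u ht hu'), hθ.2 u s hu' hs y,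
      hθ.2 t s ht hs y, hθ.2 u t hu' ht x, intervalIntegral.integral_symm t u]
    have := intervalIntegral.integral_add_adjacent_intervals (i₁ t u ht hu') (i₁ u s hu' hs)
    rw [← this]
    abel
  have hYc : ContinuousOn Y (Icc t s) := by
    have h1 := intervalIntegral.continuousOn_primitive_interval' (i₃ t s ht hs) left_mem_uIcc
    rw [uIcc_of_le hts.le] at h1
    exact (continuousOn_const.add h1).congr hYeq
  have key := gronwall_fwd (f := fun u => ‖Y u‖) (a := t) (b := s) (c := C / (s - t))
    (f0 := ‖Tinv α (s - t) (θ t s y - x)‖) hYc.norm (fun _ _ => norm_nonneg _) (norm_nonneg _)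
    (by positivity) (fun u hu => by
      nth_rewrite 1 [hYeq u hu]
      refine (norm_add_le _ _).trans (add_le_add le_rfl ?_)
      refine intervalIntegral.norm_integral_le_of_norm_le hu.1
        (Filter.Eventually.of_forall fun v _ => hdr (s - t) hh hhT v _ _) ?_
      refine ContinuousOn.intervalIntegrable ?_
      rw [uIcc_of_le hu.1]
      have := hYc.mono (Icc_subset_Icc_right hu.2)
      fun_prop) s ⟨hts.le, le_rfl⟩
  have hss : θ s s y = y := by rw [hθ.2 s s hs hs y]; simp
  simp only [hY, hss, div_mul_cancel₀ C hh.ne'] at key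
  linarith

end flow

/-! ### Change of variables and the tail weight -/

lemma det_TinvL {n : ℕ} {d : Fin n → ℕ} {α h : ℝ} (h0 : 0 < h) :
    LinearMap.det (TinvL (d := d) α h : E n d →ₗ[ℝ] E n d) = (detT n d α h)⁻¹ := by
  classical
  -- in the coordinate basis indexed by pairs (block, coordinate) the matrix is diagonal
  let b : Module.Basis (Σ i : Fin n, Fin (d i)) ℝ (E n d) :=
    Pi.basis fun i => Pi.basisFun ℝ (Fin (d i))
  have hmat : LinearMap.toMatrix b b (TinvL (d := d) α h : E n d →ₗ[ℝ] E n d) =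
      Matrix.diagonal fun p : (Σ i : Fin n, Fin (d i)) =>
        (h ^ ((1 : ℝ) / α + ((p.1 : ℕ) : ℝ)))⁻¹ := by
    ext p q
    rw [LinearMap.toMatrix_apply]
    obtain ⟨i, k⟩ := p
    obtain ⟨j, l⟩ := q
    simp only [b, Pi.basis_apply, Pi.basis_repr, ContinuousLinearMap.coe_coe, TinvL_apply, Tinv,
      Pi.basisFun_repr, Pi.basisFun_apply, Pi.smul_apply, smul_eq_mul, Matrix.diagonal_apply]
    by_cases hij : i = j
    · subst hij
      by_cases hkl : k = l
      · subst hkl; simp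
      · simp [hkl]
    · simp [hij]
  rw [← LinearMap.det_toMatrix b, hmat, Matrix.det_diagonal, Fintype.prod_sigma, detT,
    ← Real.rpow_neg h0.le, ← Finset.sum_neg_distrib, Real.rpow_sum_of_pos h0]
  refine Finset.prod_congr rfl fun i _ => ?_
  simp only [Finset.prod_const, Finset.card_univ, Fintype.card_fin]
  rw [← Real.rpow_neg h0.le, ← Real.rpow_natCast, ← Real.rpow_mul h0.le]
  congr 1
  ring

lemma lintegral_scaled {n : ℕ} {d : Fin n → ℕ} {α h : ℝ} (h0 : 0 < h) (a : E n d)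
    {f : E n d → ENNReal} (hf : Measurable f) :
    ∫⁻ y, ENNReal.ofReal (detT n d α h)⁻¹ * f (Tinv α h (y - a)) = ∫⁻ v, f v := by
  have hD : 0 < detT n d α h := rpow_pos_of_pos h0 _
  have hdet := det_TinvL (d := d) (α := α) h0
  have hmeas : Measurable fun y : E n d => Tinv α h y := (TinvL (d := d) α h).continuous.measurable
  have hmap := Measure.map_linearMap_addHaar_eq_smul_addHaar (volume : Measure (E n d))
    (f := (TinvL (d := d) α h : E n d →ₗ[ℝ] E n d)) (by rw [hdet]; positivity)
  rw [hdet, inv_inv, abs_of_pos hD] at hmap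
  have hmap' : Measure.map (fun y : E n d => Tinv α h y) volume =
      ENNReal.ofReal (detT n d α h) • (volume : Measure (E n d)) := hmap
  rw [lintegral_sub_right_eq_self
      (fun y => ENNReal.ofReal (detT n d α h)⁻¹ * f (Tinv α h y)) a,
    lintegral_const_mul' _ _ ENNReal.ofReal_ne_top, ← lintegral_map hf hmeas, hmap', lintegral_smul_measure,
    smul_eq_mul, ← mul_assoc, ← ENNReal.ofReal_mul (by positivity), inv_mul_cancel₀ hD.ne',
    ENNReal.ofReal_one, one_mul]

/-- The weights bounding the excess decay at `w` on `{|z| ≥ K}` are at most `1` and tend to `0`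
pointwise. -/
lemma tail_weight_tendsto {n : ℕ} {d : Fin n → ℕ} (P : Measure (E n d)) [IsFiniteMeasure P] :
    Filter.Tendsto (fun K : ℝ => ∫ w, (1 + max 0 (K - ‖w‖))⁻¹ ∂P) Filter.atTop (nhds 0) := by
  have := tendsto_integral_filter_of_dominated_convergence (μ := P) (l := Filter.atTop)
    (F := fun (K : ℝ) (w : E n d) => (1 + max 0 (K - ‖w‖))⁻¹) (f := fun _ => (0 : ℝ))
    (fun _ => 1) (Filter.Eventually.of_forall fun K =>
      (by fun_prop : Measurable fun w : E n d =>
        (1 + max 0 (K - ‖w‖))⁻¹).aestronglyMeasurable)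
    (Filter.Eventually.of_forall fun K => Filter.Eventually.of_forall fun w => by
      have : 0 ≤ max 0 (K - ‖w‖) := le_max_left _ _
      rw [norm_of_nonneg (by positivity)]
      exact inv_le_one_of_one_le₀ (by linarith))
    (integrable_const _)
    (Filter.Eventually.of_forall fun w => by
      refine Filter.Tendsto.inv_tendsto_atTop ?_
      refine Filter.tendsto_atTop_mono (fun K => ?_)
        (Filter.tendsto_atTop_add_const_right _ (-‖w‖) Filter.tendsto_id)
      have := le_max_right 0 (K - ‖w‖)
      simp only [id]
      linarith)
  simpa using this

/-! ### The tail estimate -/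

/-- Corollary `Smoothing_effect`, off-diagonal tail estimate.  Let `θ` be a
flow for `(A,F)`, `P̄` a finite measure and `p̄ ≥ 0` with
`p̄(z) ≤ C₀ ∫ (1+|z−w|)^{−(N+2)} P̄(dw)`.  Then for every `η > 0` there is `K₀ > 0` such
that for all `K ≥ K₀`, all `0 ≤ t < s ≤ T` and all `x`:
`∫_{|𝕋_{s−t}⁻¹(θ_{t,s}(y)−x)| ≥ K} (det 𝕋_{s−t})⁻¹ p̄(𝕋_{s−t}⁻¹(θ_{t,s}(y)−x)) dy ≤ η`. -/
theorem stmt6 {n : ℕ} [NeZero n] {d : Fin n → ℕ} {α T K' : ℝ}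
    {A : ℝ → E n d →L[ℝ] E n d} {F : ℝ → E n d → E n d} {β : Fin n → ℝ}
    (hc : ChainHyp n d α T K' A F β)
    (θ : ℝ → ℝ → E n d → E n d) (hθ : IsFlow T A F θ)
    (Pb : Measure (E n d)) [IsFiniteMeasure Pb]
    (pbar : E n d → ℝ) (hpbar0 : ∀ z, 0 ≤ pbar z)
    (C₀ : ℝ) (hC₀ : 0 < C₀)
    (hpbar : ∀ z : E n d,
      pbar z ≤ C₀ * ∫ w, (1 + ‖z - w‖) ^ (-(((∑ i : Fin n, d i : ℕ) : ℝ) + 2)) ∂Pb) :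
    ∀ η : ℝ, 0 < η → ∃ K₀ : ℝ, 0 < K₀ ∧ ∀ K : ℝ, K₀ ≤ K →
      ∀ t s : ℝ, 0 ≤ t → t < s → s ≤ T → ∀ x : E n d,
        (∫ y in {y : E n d | K ≤ ‖Tinv α (s - t) (θ t s y - x)‖},
            (detT n d α (s - t))⁻¹ * pbar (Tinv α (s - t) (θ t s y - x))) ≤ η := by
  intro η hη
  obtain ⟨Λ, hΛ, hcomp⟩ := flow_compare hc hθ
  set N : ℝ := ((∑ i : Fin n, d i : ℕ) : ℝ) with hN
  have hN0 : 0 ≤ N := Nat.cast_nonneg _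
  -- the mass of the envelope after trading one power of decay for the factor in `K`
  set J : ℝ := (∫⁻ v : E n d, ENNReal.ofReal ((1 + ‖v‖) ^ (-(N + 1)))).toReal with hJ
  have hJtop : ∫⁻ v : E n d, ENNReal.ofReal ((1 + ‖v‖) ^ (-(N + 1))) = ENNReal.ofReal J := by
    rw [hJ, ENNReal.ofReal_toReal]
    refine (finite_integral_one_add_norm ?_).ne
    rw [Module.finrank_pi_fintype]
    simp only [Module.finrank_fin_fun, hN]
    push_cast
    linarith
  have hJ0 : 0 ≤ J := ENNReal.toReal_nonneg
  have hlim : Filter.Tendsto (fun K : ℝ =>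
      C₀ * ((∫ w, (1 + max 0 (K - ‖w‖))⁻¹ ∂Pb) * (Λ ^ (N + 1) * J)))
      Filter.atTop (nhds 0) := by
    have := ((tail_weight_tendsto Pb).mul_const (Λ ^ (N + 1) * J)).const_mul C₀
    simpa using this
  obtain ⟨K₁, hK₁⟩ := Filter.eventually_atTop.1 (hlim.eventually_le_const hη)
  refine ⟨max K₁ 1, by positivity, fun K hK t s ht hts hsT x => ?_⟩
  have hKη := hK₁ K ((le_max_left _ _).trans hK)
  have h0 : 0 < s - t := by linarith
  set D := detT n d α (s - t) with hD
  have hD0 : 0 < D := rpow_pos_of_pos h0 _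
  set Z : E n d → E n d := fun y => Tinv α (s - t) (θ t s y - x) with hZ
  have hTm : Measurable fun y : E n d => Tinv α (s - t) y :=
    (TinvL (d := d) α (s - t)).continuous.measurable
  have hZm : Measurable Z :=
    hTm.comp ((hθ.1.comp (by fun_prop : Measurable fun y : E n d => (t, s, y))).sub_const x)
  set S : Set (E n d) := {y | K ≤ ‖Z y‖} with hS
  have hSm : MeasurableSet S := measurableSet_le measurable_const hZm.norm
  -- the mass produced by a point `w` of `Pb`
  have inner_bound : ∀ w : E n d,
      ∫⁻ y in S, ENNReal.ofReal D⁻¹ * ENNReal.ofReal ((1 + ‖Z y - w‖) ^ (-(N + 2))) ≤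
        ENNReal.ofReal ((1 + max 0 (K - ‖w‖))⁻¹) * ENNReal.ofReal (Λ ^ (N + 1) * J) := by
    intro w
    have hρ : 0 ≤ max 0 (K - ‖w‖) := le_max_left _ _
    -- `x' = x + 𝕋_h w` absorbs the shift by `w`
    set x' : E n d := x + fun i : Fin n => ((s - t) ^ ((1 : ℝ) / α + ((i : ℕ) : ℝ))) • w i with hx'
    have hxw : ∀ y, Tinv α (s - t) (θ t s y - x') = Z y - w := by
      intro y
      funext i
      have : (s - t) ^ ((1 : ℝ) / α + ((i : ℕ) : ℝ)) ≠ 0 := (rpow_pos_of_pos h0 _).ne'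
      simp only [hZ, hx', Tinv, Pi.sub_apply, Pi.add_apply]
      rw [← sub_sub, smul_sub, inv_smul_smul₀ this]
    calc ∫⁻ y in S, ENNReal.ofReal D⁻¹ * ENNReal.ofReal ((1 + ‖Z y - w‖) ^ (-(N + 2)))
        ≤ ∫⁻ y in S, ENNReal.ofReal ((1 + max 0 (K - ‖w‖))⁻¹ * Λ ^ (N + 1)) *
            (ENNReal.ofReal D⁻¹ * ENNReal.ofReal
              ((1 + ‖Tinv α (s - t) (y - θ s t x')‖) ^ (-(N + 1)))) := by
          refine setLIntegral_mono' hSm fun y hy => ?_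
          rw [mul_left_comm]
          refine mul_le_mul_right ?_ _
          rw [← ENNReal.ofReal_mul (by positivity)]
          refine ENNReal.ofReal_le_ofReal ?_
          have hy' : K ≤ ‖Z y‖ := hy
          have hcy := hcomp t s ht hts hsT x' y
          rw [hxw] at hcy
          set a := 1 + ‖Z y - w‖ with ha
          set q := 1 + ‖Tinv α (s - t) (y - θ s t x')‖ with hq
          have ha0 : 0 < a := by positivity
          have hq0 : 0 < q := by positivity
          have haρ : 1 + max 0 (K - ‖w‖) ≤ a := by
            have h1 := norm_sub_norm_le (Z y) w
            have h2 : max 0 (K - ‖w‖) ≤ ‖Z y - w‖ := max_le (norm_nonneg _) (by linarith)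
            linarith
          have e1 : a ^ (-(N + 2)) = a⁻¹ * a ^ (-(N + 1)) := by
            rw [← rpow_neg_one, ← rpow_add ha0]
            congr 1
            ring
          have e2 : a ^ (-(N + 1)) ≤ Λ ^ (N + 1) * q ^ (-(N + 1)) := by
            have h1 : q / Λ ≤ a := by rw [div_le_iff₀ hΛ]; linarith
            have h2 := rpow_le_rpow_of_nonpos (by positivity : 0 < q / Λ) h1
              (by linarith : -(N + 1) ≤ 0)
            rw [div_rpow hq0.le hΛ.le, rpow_neg hΛ.le, div_inv_eq_mul] at h2
            linarith
          rw [e1, mul_assoc]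
          refine mul_le_mul ?_ e2 (by positivity) (by positivity)
          exact inv_anti₀ (by positivity) haρ
      _ ≤ ∫⁻ y, ENNReal.ofReal ((1 + max 0 (K - ‖w‖))⁻¹ * Λ ^ (N + 1)) *
            (ENNReal.ofReal D⁻¹ * ENNReal.ofReal
              ((1 + ‖Tinv α (s - t) (y - θ s t x')‖) ^ (-(N + 1)))) := setLIntegral_le_lintegral _ _
      _ = ENNReal.ofReal ((1 + max 0 (K - ‖w‖))⁻¹ * Λ ^ (N + 1)) * ENNReal.ofReal J := by
          rw [lintegral_const_mul' _ _ ENNReal.ofReal_ne_top,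
            lintegral_scaled h0 (θ s t x')
              (f := fun v => ENNReal.ofReal ((1 + ‖v‖) ^ (-(N + 1)))) (by fun_prop), hJtop]
      _ = _ := by
          rw [← ENNReal.ofReal_mul (by positivity), ← ENNReal.ofReal_mul (by positivity), mul_assoc]
  have hjm : Measurable (Function.uncurry fun (y w : E n d) =>
      ENNReal.ofReal D⁻¹ * ENNReal.ofReal ((1 + ‖Z y - w‖) ^ (-(N + 2)))) := by
    have h1 : Measurable fun p : E n d × E n d => Z p.1 - p.2 :=
      (hZm.comp measurable_fst).sub measurable_snd
    exact measurable_const.mul (((measurable_const.add h1.norm).pow_const _).ennreal_ofReal)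
  have hwi : Integrable (fun w : E n d => (1 + max 0 (K - ‖w‖))⁻¹) Pb := by
    refine (integrable_const (1 : ℝ)).mono' (by fun_prop : Measurable fun w : E n d =>
        (1 + max 0 (K - ‖w‖))⁻¹).aestronglyMeasurable
      (Filter.Eventually.of_forall fun w => ?_)
    have : 0 ≤ max 0 (K - ‖w‖) := le_max_left _ _
    rw [norm_of_nonneg (by positivity)]
    exact inv_le_one_of_one_le₀ (by linarith)
  have total : ∫⁻ y in S, ENNReal.ofReal ‖D⁻¹ * pbar (Z y)‖ ≤ ENNReal.ofReal η := by
    calc ∫⁻ y in S, ENNReal.ofReal ‖D⁻¹ * pbar (Z y)‖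
        ≤ ∫⁻ y in S, ENNReal.ofReal C₀ * ∫⁻ w, ENNReal.ofReal D⁻¹ *
            ENNReal.ofReal ((1 + ‖Z y - w‖) ^ (-(N + 2))) ∂Pb := by
          refine lintegral_mono fun y => ?_
          rw [norm_of_nonneg (mul_nonneg (by positivity) (hpbar0 _)),
            lintegral_const_mul' _ _ ENNReal.ofReal_ne_top, mul_left_comm,
            ENNReal.ofReal_mul (by positivity)]
          refine mul_le_mul_right ?_ _
          refine (ENNReal.ofReal_le_ofReal (hpbar (Z y))).trans ?_
          rw [ENNReal.ofReal_mul hC₀.le]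
          refine mul_le_mul_right ?_ _
          rw [← ofReal_integral_eq_lintegral_ofReal]
          · refine (integrable_const (1 : ℝ)).mono'
              (by fun_prop : Measurable fun w : E n d =>
                (1 + ‖Z y - w‖) ^ (-(N + 2))).aestronglyMeasurable
              (Filter.Eventually.of_forall fun w => ?_)
            rw [norm_of_nonneg (by positivity)]
            exact rpow_le_one_of_one_le_of_nonpos
              (by linarith [norm_nonneg (Z y - w)]) (by linarith)
          · exact Filter.Eventually.of_forall fun w => by positivity
      _ = ENNReal.ofReal C₀ * ∫⁻ w, (∫⁻ y in S, ENNReal.ofReal D⁻¹ *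
            ENNReal.ofReal ((1 + ‖Z y - w‖) ^ (-(N + 2)))) ∂Pb := by
          rw [lintegral_const_mul' _ _ ENNReal.ofReal_ne_top,
            lintegral_lintegral_swap hjm.aemeasurable]
      _ ≤ ENNReal.ofReal C₀ * ∫⁻ w, ENNReal.ofReal ((1 + max 0 (K - ‖w‖))⁻¹) *
            ENNReal.ofReal (Λ ^ (N + 1) * J) ∂Pb := by
          gcongr with w
          exact inner_bound w
      _ = ENNReal.ofReal
            (C₀ * ((∫ w, (1 + max 0 (K - ‖w‖))⁻¹ ∂Pb) * (Λ ^ (N + 1) * J))) := by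
          have hnn : ∀ w : E n d, 0 ≤ (1 + max 0 (K - ‖w‖))⁻¹ := fun w => by
            have : 0 ≤ max 0 (K - ‖w‖) := le_max_left _ _
            positivity
          rw [lintegral_mul_const' _ _ ENNReal.ofReal_ne_top,
            ← ofReal_integral_eq_lintegral_ofReal hwi (Filter.Eventually.of_forall hnn),
            ← ENNReal.ofReal_mul (integral_nonneg hnn), ← ENNReal.ofReal_mul hC₀.le]
      _ ≤ ENNReal.ofReal η := ENNReal.ofReal_le_ofReal hKη
  -- this bound also holds when `pbar` is not measurable: the Bochner integral is then `0`
  calc ∫ y in S, D⁻¹ * pbar (Z y) ≤ ‖∫ y in S, D⁻¹ * pbar (Z y)‖ := le_norm_self _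
    _ ≤ (∫⁻ y in S, ENNReal.ofReal ‖D⁻¹ * pbar (Z y)‖).toReal := norm_integral_le_lintegral_norm _
    _ ≤ η := ENNReal.toReal_le_of_le_ofReal hη.le total

end
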